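/- Fix real α, β > −1, j ∈ ℕ, γ ∈ ℝ, M > 0, and a sequence M_n ≥ 0 with lim_{n→∞} M_n n^γ = M. Suppose γ = 2(α+2j+1). Let (b_0, …, b_{j+1}) be the unique solution of the triangular linear system Σ_{k=0}^{i} b_k·C(i,k)·(−1)^k·k!·2^k·Γ(α+i+1)/Γ(α+i+k+1) = θ_{α,β,j,i} for i = 0, 1, …, j+1, where C(i,k) is the binomial coefficient and θ_{α,β,j,i} = [M(i−j) + Γ²(α+j+1)·2^{α+β+2j+1}·(α+2j+1)·(α+j+i+1)] / [(α+j+i+1)·(M + Γ²(α+j+1)·2^{α+β+2j+1}·(α+2j+1))]. Then lim_{n→∞} Q_n(1 − z²/(2n²))/n^α = Σ_{i=0}^{j+1} b_i·2^i·(z/2)^{2i}·g_{α+2i}(z), uniformly on compact subsets of ℂ. -/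

import Mathlib

open Polynomial Filter

/-- The Jacobi polynomial `P_n^{(α,β)}` as a real polynomial. -/
noncomputable def jacobiP (α β : ℝ) (n : ℕ) : Polynomial ℝ :=
  ∑ k ∈ Finset.range (n + 1),
    Polynomial.C (Real.Gamma (n + α + 1) / (Real.Gamma ((n : ℝ) - k + 1) * Real.Gamma (α + k + 1)) *
        (Real.Gamma (n + β + 1) / (Real.Gamma ((k : ℝ) + 1) * Real.Gamma ((n : ℝ) - k + β + 1)))) *
      (Polynomial.C (2⁻¹ : ℝ) * (Polynomial.X - 1)) ^ k *
      (Polynomial.C (2⁻¹ : ℝ) * (Polynomial.X + 1)) ^ (n - k)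

/-- The squared Jacobi norm `‖P_n^{(α,β)}‖²`. -/
noncomputable def jacobiNormSq (α β : ℝ) (n : ℕ) : ℝ :=
  ∫ x in (-1 : ℝ)..1, (jacobiP α β n).eval x ^ 2 * (1 - x) ^ α * (1 + x) ^ β

/-- The kernel `K_n^{(j,k)}(x,y)`. -/
noncomputable def kernK (α β : ℝ) (j k n : ℕ) (x y : ℝ) : ℝ :=
  ∑ i ∈ Finset.range (n + 1),
    (Polynomial.derivative^[j] (jacobiP α β i)).eval x *
      (Polynomial.derivative^[k] (jacobiP α β i)).eval y / jacobiNormSq α β i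

/-- The kernel `K_n^{(j,0)}(1,·)` as a polynomial. -/
noncomputable def kernKPoly (α β : ℝ) (j n : ℕ) : Polynomial ℝ :=
  ∑ i ∈ Finset.range (n + 1),
    Polynomial.C ((Polynomial.derivative^[j] (jacobiP α β i)).eval 1 / jacobiNormSq α β i) *
      jacobiP α β i

/-- The varying Sobolev inner product `(f,g)_{S,n}` with mass `m`. -/
noncomputable def sobInner (α β : ℝ) (j : ℕ) (m : ℝ) (f g : Polynomial ℝ) : ℝ :=
  (∫ x in (-1 : ℝ)..1, f.eval x * g.eval x * (1 - x) ^ α * (1 + x) ^ β) +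
    m * (Polynomial.derivative^[j] f).eval 1 * (Polynomial.derivative^[j] g).eval 1

/-- The Jacobi–Sobolev orthogonal polynomial `Q_n`. -/
noncomputable def sobQ (α β : ℝ) (j : ℕ) (Ms : ℕ → ℝ) (n : ℕ) : Polynomial ℝ :=
  jacobiP α β n -
    Polynomial.C (Ms n * (Polynomial.derivative^[j] (jacobiP α β n)).eval 1 /
        (1 + Ms n * kernK α β j j (n - 1) 1 1)) *
      kernKPoly α β j (n - 1)

/-- The entire function `g_ν(z) = ∑ (-1)^k (z/2)^{2k}/(k! Γ(k+ν+1))`, so that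
`J_ν(x) = (x/2)^ν g_ν(x)`. -/
noncomputable def besselG (ν : ℝ) (z : ℂ) : ℂ :=
  ∑' k : ℕ, (-1) ^ k / ((Nat.factorial k : ℂ) * Complex.Gamma ((k : ℂ) + (ν : ℂ) + 1)) *
    (z / 2) ^ (2 * k)

/-!
Expand `Q_n` in powers of `(x - 1) / 2`. At `x = 1 - z² / (2n²)` the `m`-th power contributes
`(-(z/2)²)^m / n^(2m)`, and the coefficient of `Q_n`, divided by `n^(α+2m)`, tends to
`θ_m / (m! Γ(α+m+1))` while being bounded by `C B^m / (m! Γ(α+m+1))` for all `n` and `m`. Tannery's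
theorem then gives convergence, uniform on bounded sets, to
`∑ θ_m (-(z/2)²)^m / (m! Γ(α+m+1))`. To recognise this series as the Bessel sum one needs the
triangular system for every row `m`, not only for `m ≤ j + 1`: multiplied by the rising factorial
`(α+m+1)_(j+1)`, both of its sides become polynomials in `m` of degree at most `j + 1`, so that the
`j + 2` given rows imply all the others.
-/

open Topology

/-! ### Factorial powers, Gamma quotients and the Beta integral -/

theorem descPochhammer_eval_add {R : Type*} [CommRing R] (m : ℕ) (x y : R) :
    (descPochhammer R m).eval (x + y) = ∑ k ∈ Finset.range (m + 1),
      m.choose k * ((descPochhammer R k).eval x * (descPochhammer R (m - k)).eval y) := by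
  have smeval_eq (k : ℕ) (z : R) : (descPochhammer ℤ k).smeval z = (descPochhammer R k).eval z := by
    rw [← aeval_eq_smeval, ← descPochhammer_map (algebraMap ℤ R), eval_map_algebraMap]
  have vandermonde := Ring.descPochhammer_smeval_add m (Commute.all x y)
  simpa only [smeval_eq, Finset.Nat.sum_antidiagonal_eq_sum_range_succ_mk] using vandermonde

theorem sum_neg_one_pow_mul_choose_mul_eval {R : Type*} [CommRing R] {P : R[X]} {n : ℕ}
    (hP : P.natDegree ≤ n) :
    ∑ k ∈ Finset.range (n + 1), (-1) ^ k * (n.choose k : R) * P.eval (k : R) =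
      (-1) ^ n * n.factorial * P.coeff n := by
  have iterated_difference : (fwdDiff (1 : R))^[n] P.eval 0 = n.factorial * P.coeff n := by
    rcases hP.lt_or_eq with hlt | rfl
    · simp [fwdDiff_iter_eq_zero_of_degree_lt hlt, coeff_eq_zero_of_natDegree_lt hlt]
    · simp [fwdDiff_iter_degree_eq_factorial, mul_comm]
  rw [mul_assoc, ← iterated_difference, fwdDiff_iter_eq_sum_shift, Finset.mul_sum]
  refine Finset.sum_congr rfl fun k hk => ?_
  obtain ⟨d, rfl⟩ := Nat.exists_eq_add_of_le (Finset.mem_range_succ_iff.mp hk)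
  have sign : (-1 : R) ^ (k + d) * (-1) ^ d = (-1) ^ k := by
    rw [pow_add, mul_assoc, ← mul_pow]; simp
  simp only [← sign, Nat.add_sub_cancel_left, zsmul_eq_mul, nsmul_eq_mul, zero_add, mul_one,
    Int.cast_mul, Int.cast_pow, Int.cast_neg, Int.cast_one, Int.cast_natCast]
  ring

theorem Gamma_add_natCast {x : ℝ} (hx : 0 < x) (m : ℕ) :
    Real.Gamma (x + m) = (ascPochhammer ℝ m).eval x * Real.Gamma x := by
  induction m with
  | zero => simp
  | succ m ih =>
    rw [Nat.cast_succ, ← add_assoc, Real.Gamma_add_one (by positivity), ih,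
      ascPochhammer_succ_eval]
    ring

theorem Gamma_add_one_eq_descPochhammer_mul {x : ℝ} {k : ℕ} (hk : k < x + 1) :
    Real.Gamma (x + 1) = (descPochhammer ℝ k).eval x * Real.Gamma (x - k + 1) := by
  rw [descPochhammer_eval_eq_ascPochhammer, ← Gamma_add_natCast (by linarith)]
  congr 1
  ring

theorem betaIntegrand_eq_ofReal {a b y : ℝ} (hy : y ∈ Set.uIoc (0 : ℝ) 1) :
    (y : ℂ) ^ (((a + 1 : ℝ) : ℂ) - 1) * (1 - (y : ℂ)) ^ (((b + 1 : ℝ) : ℂ) - 1) =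
      ((y ^ a * (1 - y) ^ b : ℝ) : ℂ) := by
  rw [Set.uIoc_of_le zero_le_one] at hy
  have hy' : 0 ≤ 1 - y := by linarith [hy.2]
  simp [Complex.ofReal_cpow hy.1.le, Complex.ofReal_cpow hy']

theorem intervalIntegrable_rpow_mul_one_sub_rpow {a b : ℝ} (ha : -1 < a) (hb : -1 < b) :
    IntervalIntegrable (fun y : ℝ => y ^ a * (1 - y) ^ b) MeasureTheory.volume 0 1 := by
  have complex_integrable := Complex.betaIntegral_convergent (u := ((a + 1 : ℝ) : ℂ))
    (v := ((b + 1 : ℝ) : ℂ)) (by simpa using by linarith) (by simpa using by linarith)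
  rw [intervalIntegrable_iff]
  exact (complex_integrable.congr fun y hy => betaIntegrand_eq_ofReal hy).def'.re

theorem integral_rpow_mul_one_sub_rpow {a b : ℝ} (ha : -1 < a) (hb : -1 < b) :
    ∫ y in (0 : ℝ)..1, y ^ a * (1 - y) ^ b =
      Real.Gamma (a + 1) * Real.Gamma (b + 1) / Real.Gamma (a + b + 2) := by
  have complex_beta := Complex.betaIntegral_eq_Gamma_mul_div ((a + 1 : ℝ) : ℂ) ((b + 1 : ℝ) : ℂ)
    (by simpa using by linarith) (by simpa using by linarith)
  rw [Complex.betaIntegral, intervalIntegral.integral_congr_ae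
      (.of_forall fun y hy => betaIntegrand_eq_ofReal hy), intervalIntegral.integral_ofReal,
    ← Complex.ofReal_add, Complex.Gamma_ofReal, Complex.Gamma_ofReal,
    Complex.Gamma_ofReal] at complex_beta
  rw [show a + b + 2 = a + 1 + (b + 1) by ring]
  exact_mod_cast complex_beta

/-! ### Jacobi polynomials in powers of `(x - 1) / 2` -/

/-- The Taylor coefficients `1 / (k! Γ(ν+k+1))` of the Bessel function: the entire function
`g_ν(z)` is `∑ besselCoeff ν k * (-(z/2)^2)^k`. -/
noncomputable def besselCoeff (ν : ℝ) (k : ℕ) : ℝ :=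
  1 / (k.factorial * Real.Gamma (ν + k + 1))

/-- The coefficients of `((x-1)/2)^k ((x+1)/2)^(n-k)` in the definition of `P_n^{(α,β)}`. -/
noncomputable def jacobiBernsteinCoeff (α β : ℝ) (n k : ℕ) : ℝ :=
  Real.Gamma (n + α + 1) / (Real.Gamma ((n : ℝ) - k + 1) * Real.Gamma (α + k + 1)) *
    (Real.Gamma (n + β + 1) / (Real.Gamma ((k : ℝ) + 1) * Real.Gamma ((n : ℝ) - k + β + 1)))

/-- The coefficients of `((x-1)/2)^m` in `P_n^{(α,β)}`. They vanish for `m > n`. -/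
noncomputable def jacobiCoeff (α β : ℝ) (n m : ℕ) : ℝ :=
  Real.Gamma (n + α + 1) / n.factorial *
    (n.descFactorial m * (ascPochhammer ℝ m).eval (n + α + β + 1)) * besselCoeff α m

section JacobiCoefficients

variable {α β : ℝ}

theorem jacobiCoeff_eq_zero_of_lt {n m : ℕ} (h : n < m) : jacobiCoeff α β n m = 0 := by
  simp [jacobiCoeff, Nat.descFactorial_of_lt h]

theorem jacobiBernsteinCoeff_eq (hβ : -1 < β) {n k : ℕ} (hk : k ≤ n) :
    jacobiBernsteinCoeff α β n k = Real.Gamma (n + α + 1) / n.factorial * n.choose k *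
      (descPochhammer ℝ k).eval (n + β) / Real.Gamma (α + k + 1) := by
  have hkn : (k : ℝ) ≤ n := by exact_mod_cast hk
  have Gamma_ne : Real.Gamma (n - k + β + 1) ≠ 0 := (Real.Gamma_pos_of_pos (by linarith)).ne'
  have Gamma_quotient := Gamma_add_one_eq_descPochhammer_mul (x := n + β) (k := k) (by linarith)
  rw [jacobiBernsteinCoeff, Gamma_quotient, ← Nat.cast_sub hk, Real.Gamma_nat_eq_factorial,
    Real.Gamma_nat_eq_factorial, Nat.cast_sub hk, Nat.cast_choose ℝ hk,
    show (n : ℝ) + β - k + 1 = n - k + β + 1 by ring]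
  field_simp

theorem sum_choose_mul_descPochhammer_div_Gamma (hα : -1 < α) (x : ℝ) (m : ℕ) :
    ∑ k ∈ Finset.range (m + 1),
        m.choose k * (descPochhammer ℝ k).eval x / Real.Gamma (α + k + 1) =
      (ascPochhammer ℝ m).eval (x + α + 1) / Real.Gamma (α + m + 1) := by
  rw [show x + α + 1 = x + (α + m) - m + 1 by ring, ← descPochhammer_eval_eq_ascPochhammer,
    descPochhammer_eval_add, Finset.sum_div]
  refine Finset.sum_congr rfl fun k hk => ?_
  have hkm : k ≤ m := Finset.mem_range_succ_iff.mp hk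
  have Gamma_quotient := Gamma_add_one_eq_descPochhammer_mul (x := α + m) (k := m - k)
    (by push_cast [hkm]; linarith [Nat.cast_nonneg (α := ℝ) k])
  have Gamma_ne : Real.Gamma (α + m + 1) ≠ 0 :=
    (Real.Gamma_pos_of_pos (by linarith [Nat.cast_nonneg (α := ℝ) m])).ne'
  rw [Nat.cast_sub hkm, show α + m - ((m : ℝ) - k) + 1 = α + k + 1 by ring] at Gamma_quotient
  rw [Gamma_quotient] at Gamma_ne ⊢
  have := left_ne_zero_of_mul Gamma_ne
  have := right_ne_zero_of_mul Gamma_ne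
  field_simp

theorem sum_jacobiBernsteinCoeff_mul_choose (hα : -1 < α) (hβ : -1 < β) {n m : ℕ} (hm : m ≤ n) :
    ∑ k ∈ Finset.range (m + 1), jacobiBernsteinCoeff α β n k * (n - k).choose (m - k) =
      jacobiCoeff α β n m := by
  have summand (k : ℕ) (hk : k ∈ Finset.range (m + 1)) :
      jacobiBernsteinCoeff α β n k * (n - k).choose (m - k) =
        Real.Gamma (n + α + 1) / n.factorial * n.choose m *
          (m.choose k * (descPochhammer ℝ k).eval (n + β) / Real.Gamma (α + k + 1)) := by
    have hkm : k ≤ m := Finset.mem_range_succ_iff.mp hk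
    have choose_mul : (n.choose m * m.choose k : ℝ) = n.choose k * (n - k).choose (m - k) := by
      exact_mod_cast Nat.choose_mul hkm
    rw [jacobiBernsteinCoeff_eq hβ (hkm.trans hm)]
    linear_combination -(Real.Gamma (n + α + 1) / n.factorial *
      (descPochhammer ℝ k).eval (n + β) / Real.Gamma (α + k + 1)) * choose_mul
  rw [Finset.sum_congr rfl summand, ← Finset.mul_sum,
    sum_choose_mul_descPochhammer_div_Gamma hα, jacobiCoeff, besselCoeff,
    Nat.descFactorial_eq_factorial_mul_choose, show (n : ℝ) + β + α + 1 = n + α + β + 1 by ring]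
  push_cast
  field_simp

theorem jacobiP_eq_sum_jacobiCoeff (hα : -1 < α) (hβ : -1 < β) (n : ℕ) :
    jacobiP α β n = ∑ m ∈ Finset.range (n + 1),
      C (jacobiCoeff α β n m) * (C (2⁻¹ : ℝ) * (X - 1)) ^ m := by
  set T : ℝ[X] := C (2⁻¹ : ℝ) * (X - 1)
  have T_add_one : C (2⁻¹ : ℝ) * (X + 1) = T + 1 := by
    have : C (2⁻¹ : ℝ) * 2 = 1 := by rw [← C_ofNat, ← C_mul]; norm_num
    linear_combination this
  calc jacobiP α β n
    _ = ∑ k ∈ Finset.range (n + 1),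
          C (jacobiBernsteinCoeff α β n k) * T ^ k * (T + 1) ^ (n - k) := by
        rw [← T_add_one]; rfl
    _ = ∑ k ∈ Finset.range (n + 1), ∑ l ∈ Finset.range (n + 1 - k),
          C (jacobiBernsteinCoeff α β n k * (n - k).choose l) * T ^ (k + l) := by
        refine Finset.sum_congr rfl fun k hk => ?_
        rw [add_pow, Finset.mul_sum,
          Nat.succ_sub (Finset.mem_range_succ_iff.mp hk)]
        refine Finset.sum_congr rfl fun l _ => ?_
        rw [C_mul, C_eq_natCast, pow_add, one_pow]
        ring
    _ = ∑ m ∈ Finset.range (n + 1), C (jacobiCoeff α β n m) * T ^ m := by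
        rw [← Finset.sum_range_diag_flip (n + 1) fun k l =>
          C (jacobiBernsteinCoeff α β n k * (n - k).choose l) * T ^ (k + l)]
        refine Finset.sum_congr rfl fun m hm => ?_
        rw [← sum_jacobiBernsteinCoeff_mul_choose hα hβ (Finset.mem_range_succ_iff.mp hm),
          map_sum, Finset.sum_mul]
        refine Finset.sum_congr rfl fun k hk => ?_
        rw [Nat.add_sub_of_le (Finset.mem_range_succ_iff.mp hk)]

theorem aeval_jacobiP {A : Type*} [CommRing A] [Algebra ℝ A] (hα : -1 < α) (hβ : -1 < β) (n : ℕ)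
    (w : A) :
    aeval (1 + 2 * w) (jacobiP α β n) =
      ∑ m ∈ Finset.range (n + 1), algebraMap ℝ A (jacobiCoeff α β n m) * w ^ m := by
  have half_mul_two : algebraMap ℝ A 2⁻¹ * (2 * w) = w := by
    rw [← mul_assoc, ← map_ofNat (algebraMap ℝ A) 2, ← map_mul]; norm_num
  simp [jacobiP_eq_sum_jacobiCoeff hα hβ, half_mul_two]

theorem eval_one_iterate_derivative_jacobiP (hα : -1 < α) (hβ : -1 < β) (n j : ℕ) :
    (derivative^[j] (jacobiP α β n)).eval 1 = j.factorial / 2 ^ j * jacobiCoeff α β n j := by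
  have taylor_eq : taylor 1 (jacobiP α β n) =
      ∑ m ∈ Finset.range (n + 1), C (jacobiCoeff α β n m * 2⁻¹ ^ m) * X ^ m := by
    rw [jacobiP_eq_sum_jacobiCoeff hα hβ, map_sum]
    refine Finset.sum_congr rfl fun m _ => ?_
    simp [mul_pow, mul_assoc, -inv_pow]
  rw [← factorial_smul_hasseDeriv, LinearMap.smul_apply, eval_smul, ← taylor_coeff, taylor_eq,
    finsetSum_coeff]
  simp only [coeff_C_mul_X_pow, Finset.sum_ite_eq, Finset.mem_range, nsmul_eq_mul]
  split_ifs with hj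
  · rw [inv_pow]; field_simp
  · rw [jacobiCoeff_eq_zero_of_lt (by omega)]; ring

end JacobiCoefficients

/-! ### Orthogonality and the norm -/

theorem integral_mul_one_sub_rpow_mul_one_add_rpow (α β : ℝ) (f : ℝ → ℝ) :
    ∫ x in (-1 : ℝ)..1, f x * (1 - x) ^ α * (1 + x) ^ β =
      2 ^ (α + β + 1) * ∫ y in (0 : ℝ)..1, y ^ α * (1 - y) ^ β * f (1 - 2 * y) := by
  have substitution := intervalIntegral.mul_integral_comp_sub_mul (a := 0) (b := 1)
    (f := fun x => f x * (1 - x) ^ α * (1 + x) ^ β) 2 1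
  norm_num only at substitution
  rw [← substitution, Real.rpow_add_one two_ne_zero, mul_comm _ (2 : ℝ), mul_assoc (2 : ℝ)]
  congr 1
  rw [← intervalIntegral.integral_const_mul]
  apply intervalIntegral.integral_congr_uIoo
  intro y hy
  rw [Set.uIoo_of_le zero_le_one] at hy
  dsimp only
  rw [show 1 - (1 - 2 * y) = 2 * y by ring, show 1 + (1 - 2 * y) = 2 * (1 - y) by ring,
    Real.mul_rpow zero_le_two hy.1.le, Real.mul_rpow zero_le_two (sub_nonneg.2 hy.2.le),
    Real.rpow_add two_pos]
  ring

section JacobiOrthogonality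

variable {α β : ℝ}

theorem rpow_mul_eval_jacobiP {y : ℝ} (hy : y ∈ Set.Ioo (0 : ℝ) 1) (n m : ℕ) :
    y ^ (α + m) * (1 - y) ^ β * (jacobiP α β n).eval (1 - 2 * y) =
      ∑ k ∈ Finset.range (n + 1), (-1) ^ k * jacobiBernsteinCoeff α β n k *
        (y ^ (α + m + k) * (1 - y) ^ (β + (n - k : ℕ))) := by
  have hy' : 0 < 1 - y := sub_pos.2 hy.2
  rw [jacobiP, eval_finsetSum, Finset.mul_sum]
  refine Finset.sum_congr rfl fun k _ => ?_
  simp only [eval_mul, eval_pow, eval_C, eval_sub, eval_add, eval_X, eval_one]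
  rw [Real.rpow_add hy.1 (α + m), Real.rpow_add hy' β, Real.rpow_natCast, Real.rpow_natCast,
    show (2⁻¹ : ℝ) * (1 - 2 * y - 1) = (-1) * y by ring,
    show (2⁻¹ : ℝ) * (1 - 2 * y + 1) = 1 - y by ring, mul_pow, jacobiBernsteinCoeff]
  ring

theorem jacobiBernsteinCoeff_mul_Gamma_mul_Gamma (hα : -1 < α) (hβ : -1 < β) {n k : ℕ}
    (hk : k ≤ n) (m : ℕ) :
    jacobiBernsteinCoeff α β n k *
        (Real.Gamma (α + m + k + 1) * Real.Gamma (β + (n - k : ℕ) + 1)) =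
      Real.Gamma (n + α + 1) * Real.Gamma (n + β + 1) / n.factorial *
        (n.choose k * (ascPochhammer ℝ m).eval (k + (α + 1))) := by
  have hkn : (k : ℝ) ≤ n := by exact_mod_cast hk
  have arg_pos : (0 : ℝ) < k + (α + 1) := by linarith [Nat.cast_nonneg (α := ℝ) k]
  have desc_mul := Gamma_add_one_eq_descPochhammer_mul (x := n + β) (k := k) (by linarith)
  have asc_mul := Gamma_add_natCast arg_pos m
  have := (Real.Gamma_pos_of_pos arg_pos).ne'
  rw [jacobiBernsteinCoeff_eq hβ hk, desc_mul, Nat.cast_sub hk,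
    show α + m + k + 1 = k + (α + 1) + m by ring, asc_mul,
    show α + k + 1 = k + (α + 1) by ring, show β + ((n : ℝ) - k) + 1 = n + β - k + 1 by ring]
  field_simp

theorem natDegree_ascPochhammer_comp_X_add_C (m : ℕ) (c : ℝ) :
    ((ascPochhammer ℝ m).comp (X + C c)).natDegree = m := by
  rw [natDegree_comp, natDegree_X_add_C, mul_one, ascPochhammer_natDegree]

theorem coeff_ascPochhammer_comp_X_add_C {n m : ℕ} (hm : m ≤ n) (c : ℝ) :
    ((ascPochhammer ℝ m).comp (X + C c)).coeff n = if m = n then 1 else 0 := by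
  have natDegree_eq := natDegree_ascPochhammer_comp_X_add_C m c
  split_ifs with h
  · subst h
    simpa [Monic, leadingCoeff, natDegree_eq] using (monic_ascPochhammer ℝ m).comp_X_add_C c
  · exact coeff_eq_zero_of_natDegree_lt (by omega)

theorem integral_rpow_mul_jacobiP (hα : -1 < α) (hβ : -1 < β) {n m : ℕ} (hm : m ≤ n) :
    ∫ y in (0 : ℝ)..1, y ^ (α + m) * (1 - y) ^ β * (jacobiP α β n).eval (1 - 2 * y) =
      if m = n then (-1) ^ n * (Real.Gamma (n + α + 1) * Real.Gamma (n + β + 1) /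
        Real.Gamma (α + β + 2 * n + 2)) else 0 := by
  have hαk (k : ℕ) : -1 < α + m + k := by
    linarith [Nat.cast_nonneg (α := ℝ) m, Nat.cast_nonneg (α := ℝ) k]
  have hβk (k : ℕ) : -1 < β + (n - k : ℕ) := by linarith [Nat.cast_nonneg (α := ℝ) (n - k)]
  have integral_summand (k : ℕ) (hk : k ∈ Finset.range (n + 1)) :
      ∫ y in (0 : ℝ)..1, (-1) ^ k * jacobiBernsteinCoeff α β n k *
        (y ^ (α + m + k) * (1 - y) ^ (β + (n - k : ℕ))) =
      Real.Gamma (n + α + 1) * Real.Gamma (n + β + 1) / n.factorial /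
          Real.Gamma (α + β + m + n + 2) *
        ((-1) ^ k * n.choose k * ((ascPochhammer ℝ m).comp (X + C (α + 1))).eval (k : ℝ)) := by
    have hkn : k ≤ n := Finset.mem_range_succ_iff.mp hk
    rw [intervalIntegral.integral_const_mul, integral_rpow_mul_one_sub_rpow (hαk k) (hβk k),
      show α + m + k + (β + (n - k : ℕ)) + 2 = α + β + m + n + 2 by push_cast [hkn]; ring,
      eval_comp, eval_add, eval_X, eval_C]
    linear_combination (-1) ^ k / Real.Gamma (α + β + m + n + 2) *
      jacobiBernsteinCoeff_mul_Gamma_mul_Gamma hα hβ hkn m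
  rw [intervalIntegral.integral_congr_uIoo fun y hy => rpow_mul_eval_jacobiP
      (by rwa [Set.uIoo_of_le zero_le_one] at hy) n m,
    intervalIntegral.integral_finsetSum fun k _ =>
      (intervalIntegrable_rpow_mul_one_sub_rpow (hαk k) (hβk k)).const_mul _,
    Finset.sum_congr rfl integral_summand, ← Finset.mul_sum,
    sum_neg_one_pow_mul_choose_mul_eval
      ((natDegree_ascPochhammer_comp_X_add_C m _).trans_le hm),
    coeff_ascPochhammer_comp_X_add_C hm]
  split_ifs with h
  · rw [h, show α + β + n + n + 2 = α + β + 2 * n + 2 by ring]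
    field_simp
  · simp

theorem jacobiNormSq_eq (hα : -1 < α) (hβ : -1 < β) (n : ℕ) :
    jacobiNormSq α β n = 2 ^ (α + β + 1) * (jacobiCoeff α β n n *
      (Real.Gamma (n + α + 1) * Real.Gamma (n + β + 1) / Real.Gamma (α + β + 2 * n + 2))) := by
  have integrable_summand (m : ℕ) : IntervalIntegrable (fun y : ℝ => jacobiCoeff α β n m *
      (-1) ^ m * (y ^ (α + m) * (1 - y) ^ β * (jacobiP α β n).eval (1 - 2 * y)))
      MeasureTheory.volume 0 1 :=
    ((intervalIntegrable_rpow_mul_one_sub_rpow (by linarith [Nat.cast_nonneg (α := ℝ) m])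
      hβ).mul_continuousOn (by fun_prop)).const_mul _
  have expand_one_factor (y : ℝ) (hy : y ∈ Set.uIoo (0 : ℝ) 1) :
      y ^ α * (1 - y) ^ β * (jacobiP α β n).eval (1 - 2 * y) ^ 2 =
        ∑ m ∈ Finset.range (n + 1), jacobiCoeff α β n m * (-1) ^ m *
          (y ^ (α + m) * (1 - y) ^ β * (jacobiP α β n).eval (1 - 2 * y)) := by
    rw [Set.uIoo_of_le zero_le_one] at hy
    have expansion := aeval_jacobiP hα hβ n (-y)
    rw [mul_neg, ← sub_eq_add_neg, coe_aeval_eq_eval] at expansion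
    rw [sq]
    nth_rw 1 [expansion]
    simp_rw [Finset.sum_mul, Finset.mul_sum]
    refine Finset.sum_congr rfl fun m _ => ?_
    rw [Real.rpow_add hy.1, Real.rpow_natCast, neg_pow, Algebra.algebraMap_self, RingHom.id_apply]
    ring
  rw [jacobiNormSq, integral_mul_one_sub_rpow_mul_one_add_rpow α β fun x =>
      (jacobiP α β n).eval x ^ 2, intervalIntegral.integral_congr_uIoo expand_one_factor,
    intervalIntegral.integral_finsetSum fun m _ => integrable_summand m,
    Finset.sum_congr rfl fun m hm => by rw [intervalIntegral.integral_const_mul,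
      integral_rpow_mul_jacobiP hα hβ (Finset.mem_range_succ_iff.mp hm), mul_ite, mul_zero],
    Finset.sum_ite_eq' _ n fun m => _, if_pos (Finset.self_mem_range_succ n), mul_assoc,
    ← mul_assoc ((-1) ^ n) ((-1) ^ n), ← mul_pow, neg_one_mul, neg_neg, one_pow, one_mul]

end JacobiOrthogonality

/-! ### Power asymptotics of sequences -/

/-- `a n = L * n ^ s + o(n ^ s)` as `n → ∞`. Unlike `Asymptotics.IsEquivalent` this allows
`L = 0`, which occurs below when a limiting coefficient vanishes. -/
def HasPowerAsymptotics (a : ℕ → ℝ) (s L : ℝ) : Prop :=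
  Tendsto (fun n : ℕ => a n / (n : ℝ) ^ s) atTop (𝓝 L)

theorem eventually_natCast_pos : ∀ᶠ n : ℕ in atTop, (0 : ℝ) < n :=
  (eventually_gt_atTop 0).mono fun _ hn => by exact_mod_cast hn

theorem rpow_add_two_mul_natCast {x : ℝ} (hx : x ≠ 0) (a : ℝ) (m : ℕ) :
    x ^ (a + 2 * m) = x ^ a * x ^ (2 * m) := by
  rw [← Real.rpow_add_natCast hx, Nat.cast_mul, Nat.cast_two]

namespace HasPowerAsymptotics

variable {a b : ℕ → ℝ} {s t L L' : ℝ}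

theorem congr' (h : HasPowerAsymptotics a s L) (hab : a =ᶠ[atTop] b) :
    HasPowerAsymptotics b s L :=
  Tendsto.congr' (hab.mono fun n hn => by rw [hn]) h

theorem of_eq (h : HasPowerAsymptotics a s L) (hs : s = t) (hL : L = L') :
    HasPowerAsymptotics a t L' :=
  hs ▸ hL ▸ h

theorem const (c : ℝ) : HasPowerAsymptotics (fun _ => c) 0 c := by
  simp [HasPowerAsymptotics]

theorem mul (ha : HasPowerAsymptotics a s L) (hb : HasPowerAsymptotics b t L') :
    HasPowerAsymptotics (fun n => a n * b n) (s + t) (L * L') := by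
  refine (Tendsto.mul ha hb).congr' (eventually_natCast_pos.mono fun n hn => ?_)
  simp only [Real.rpow_add hn, div_mul_div_comm]

theorem div (ha : HasPowerAsymptotics a s L) (hb : HasPowerAsymptotics b t L') (hL' : L' ≠ 0) :
    HasPowerAsymptotics (fun n => a n / b n) (s - t) (L / L') := by
  refine (Tendsto.div ha hb hL').congr' (eventually_natCast_pos.mono fun n hn => ?_)
  simp only [Real.rpow_sub hn, Pi.div_apply, div_div_div_comm]

theorem add (ha : HasPowerAsymptotics a s L) (hb : HasPowerAsymptotics b s L') :
    HasPowerAsymptotics (fun n => a n + b n) s (L + L') :=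
  (Tendsto.add ha hb).congr fun n => by rw [add_div]

theorem sub (ha : HasPowerAsymptotics a s L) (hb : HasPowerAsymptotics b s L') :
    HasPowerAsymptotics (fun n => a n - b n) s (L - L') :=
  (Tendsto.sub ha hb).congr fun n => by rw [sub_div]

theorem abs (ha : HasPowerAsymptotics a s L) : HasPowerAsymptotics (fun n => |a n|) s |L| :=
  (Tendsto.abs ha).congr' <| eventually_natCast_pos.mono fun n hn => by
    rw [abs_div, abs_of_pos (Real.rpow_pos_of_pos hn s)]

theorem exists_le (ha : HasPowerAsymptotics a s L) :
    ∃ C, 0 ≤ C ∧ ∀ n : ℕ, 0 < n → a n ≤ C * (n : ℝ) ^ s := by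
  obtain ⟨C, hC⟩ := Tendsto.bddAbove_range ha
  refine ⟨max C 0, le_max_right C 0, fun n hn => ?_⟩
  rw [← div_le_iff₀ (Real.rpow_pos_of_pos (Nat.cast_pos.2 hn) s)]
  exact (hC ⟨n, rfl⟩).trans (le_max_left C 0)

end HasPowerAsymptotics

theorem hasPowerAsymptotics_natCast_add (c : ℝ) :
    HasPowerAsymptotics (fun n => n + c) 1 1 := by
  have : Tendsto (fun n : ℕ => 1 + c / (n : ℝ)) atTop (𝓝 (1 + 0)) :=
    tendsto_const_nhds.add (tendsto_const_div_atTop_nhds_zero_nat c)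
  rw [add_zero] at this
  refine this.congr' (eventually_natCast_pos.mono fun n hn => ?_)
  simp only [Real.rpow_one, add_div, div_self hn.ne']

theorem hasPowerAsymptotics_succ_rpow_sub_rpow (s : ℝ) :
    HasPowerAsymptotics (fun n => ((n + 1 : ℕ) : ℝ) ^ (s + 1) - (n : ℝ) ^ (s + 1)) s (s + 1) := by
  have derivative_at_one : HasDerivAt (fun x : ℝ => x ^ (s + 1)) (s + 1) 1 := by
    simpa using Real.hasDerivAt_rpow_const (x := 1) (p := s + 1) (Or.inl one_ne_zero)
  have inv_tendsto : Tendsto (fun n : ℕ => (n : ℝ)⁻¹) atTop (𝓝[≠] 0) :=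
    tendsto_nhdsWithin_iff.2 ⟨tendsto_inv_atTop_nhds_zero_nat,
      eventually_natCast_pos.mono fun n hn => inv_ne_zero hn.ne'⟩
  refine (derivative_at_one.tendsto_slope_zero.comp inv_tendsto).congr'
    (eventually_natCast_pos.mono fun n hn => ?_)
  have succ_div : (1 : ℝ) + (n : ℝ)⁻¹ = (n + 1) / n := by field_simp
  simp only [Function.comp_apply, smul_eq_mul, inv_inv, Real.one_rpow, succ_div,
    Real.div_rpow (by positivity : (0 : ℝ) ≤ n + 1) hn.le, Real.rpow_add_one hn.ne', Nat.cast_succ]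
  field_simp

-- Compare with the telescoping weights `(n+1)^(s+1) - n^(s+1) ~ (s+1) n^s`.
theorem HasPowerAsymptotics.sum_range {a : ℕ → ℝ} {s L : ℝ} (hs : -1 < s)
    (ha : HasPowerAsymptotics a s L) :
    HasPowerAsymptotics (fun n => ∑ i ∈ Finset.range n, a i) (s + 1) (L / (s + 1)) := by
  have hs' : 0 < s + 1 := by linarith
  set g : ℕ → ℝ := fun n => ((n + 1 : ℕ) : ℝ) ^ (s + 1) - (n : ℝ) ^ (s + 1) with hg
  have g_asymptotics : HasPowerAsymptotics g s (s + 1) :=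
    hasPowerAsymptotics_succ_rpow_sub_rpow s
  have sum_g (n : ℕ) : ∑ i ∈ Finset.range n, g i = (n : ℝ) ^ (s + 1) := by
    rw [hg, Finset.sum_range_sub fun n : ℕ => (n : ℝ) ^ (s + 1)]
    simp [Real.zero_rpow hs'.ne']
  have g_nonneg : 0 ≤ g := fun n =>
    sub_nonneg.2 (Real.rpow_le_rpow (by positivity) (by push_cast; linarith) hs'.le)
  have sum_g_atTop : Tendsto (fun n => ∑ i ∈ Finset.range n, g i) atTop atTop := by
    simpa only [sum_g, Function.comp_def] using
      (tendsto_rpow_atTop hs').comp tendsto_natCast_atTop_atTop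
  have g_ne_zero : ∀ᶠ n in atTop, g n ≠ 0 :=
    (Tendsto.eventually_ne g_asymptotics hs'.ne').mono fun n hn h => hn (by rw [h, zero_div])
  have ratio : Tendsto (fun n => (a n - L / (s + 1) * g n) / g n) atTop (𝓝 0) := by
    have h := (ha.div g_asymptotics hs'.ne')
    rw [HasPowerAsymptotics, sub_self] at h
    simp only [Real.rpow_zero, div_one] at h
    rw [← sub_self (L / (s + 1))]
    refine (h.sub_const _).congr' (g_ne_zero.mono fun n hn => ?_)
    field_simp
  have sum_isLittleO := ((Asymptotics.isLittleO_iff_tendsto'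
    (g_ne_zero.mono fun n hn h => absurd h hn)).2 ratio).sum_range g_nonneg sum_g_atTop
  have shifted := sum_isLittleO.tendsto_div_nhds_zero.add_const (L / (s + 1))
  rw [zero_add] at shifted
  refine shifted.congr' (eventually_natCast_pos.mono fun n hn => ?_)
  have := (Real.rpow_pos_of_pos hn (s + 1)).ne'
  rw [Finset.sum_sub_distrib, ← Finset.mul_sum, sum_g]
  field_simp
  ring

theorem hasPowerAsymptotics_ascPochhammer (m : ℕ) (c : ℝ) :
    HasPowerAsymptotics (fun n => (ascPochhammer ℝ m).eval (n + c)) m 1 := by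
  induction m with
  | zero => simpa using HasPowerAsymptotics.const 1
  | succ m ih =>
    refine ((ih.mul (hasPowerAsymptotics_natCast_add (c + m))).congr'
      (.of_forall fun n => ?_)).of_eq (by push_cast; ring) (mul_one 1)
    dsimp only
    rw [ascPochhammer_succ_eval, add_assoc]

theorem hasPowerAsymptotics_descFactorial (m : ℕ) :
    HasPowerAsymptotics (fun n => n.descFactorial m) m 1 := by
  refine (hasPowerAsymptotics_ascPochhammer m (1 - m)).congr' (.of_forall fun n => ?_)
  dsimp only
  rw [← descPochhammer_eval_eq_descFactorial, descPochhammer_eval_eq_ascPochhammer]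
  congr 1
  ring

theorem GammaSeq_mul_Gamma_add {s : ℝ} (hs : 0 < s) (n : ℕ) :
    Real.GammaSeq s n * Real.Gamma (s + n + 1) = (n : ℝ) ^ s * n.factorial * Real.Gamma s := by
  have prod_eq_ascPochhammer (k : ℕ) :
      ∏ i ∈ Finset.range k, (s + i) = (ascPochhammer ℝ k).eval s := by
    induction k with
    | zero => simp
    | succ k ih => rw [Finset.prod_range_succ, ih, ascPochhammer_succ_eval]
  have := (ascPochhammer_pos (n + 1) s hs).ne'
  rw [Real.GammaSeq, prod_eq_ascPochhammer, add_assoc, ← Nat.cast_succ, Gamma_add_natCast hs]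
  field_simp

theorem hasPowerAsymptotics_Gamma_div_factorial (a : ℝ) :
    HasPowerAsymptotics (fun n => Real.Gamma (n + a + 1) / n.factorial) a 1 := by
  obtain ⟨k, hk⟩ := exists_nat_gt (-a)
  induction k generalizing a with
  | zero =>
    have ha : 0 < a := by simpa using hk
    have Gamma_ne : Real.Gamma a ≠ 0 := (Real.Gamma_pos_of_pos ha).ne'
    have inv_GammaSeq : Tendsto (fun n => Real.Gamma a / Real.GammaSeq a n) atTop (𝓝 1) := by
      rw [← div_self Gamma_ne]
      exact tendsto_const_nhds.div (Real.GammaSeq_tendsto_Gamma a) Gamma_ne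
    refine inv_GammaSeq.congr' (eventually_natCast_pos.mono fun n hn => ?_)
    have Gamma_shift_ne := (Real.Gamma_pos_of_pos (by positivity : 0 < a + n + 1)).ne'
    have := (Real.rpow_pos_of_pos hn a).ne'
    dsimp only
    rw [eq_div_of_mul_eq Gamma_shift_ne (GammaSeq_mul_Gamma_add ha n), add_comm (n : ℝ) a]
    field_simp
  | succ k ih =>
    refine (((ih (a + 1) (by push_cast at hk; linarith)).div
      (hasPowerAsymptotics_natCast_add (a + 1)) one_ne_zero).congr' ?_).of_eq (by ring) (by simp)
    obtain ⟨N, hN⟩ := exists_nat_gt (-(a + 1))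
    filter_upwards [eventually_ge_atTop N] with n hn
    have hnN : (N : ℝ) ≤ n := by exact_mod_cast hn
    have arg_ne : (n : ℝ) + (a + 1) ≠ 0 := by linarith
    rw [Real.Gamma_add_one arg_ne, ← add_assoc]
    rw [← add_assoc] at arg_ne
    field_simp

/-! ### Asymptotics and bounds for the Jacobi coefficients -/

section JacobiAsymptotics

variable {α β : ℝ}

theorem besselCoeff_pos (hα : -1 < α) (m : ℕ) : 0 < besselCoeff α m :=
  one_div_pos.2 <| mul_pos (by positivity) <|
    Real.Gamma_pos_of_pos (by linarith [Nat.cast_nonneg (α := ℝ) m])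

theorem hasPowerAsymptotics_jacobiCoeff (α β : ℝ) (m : ℕ) :
    HasPowerAsymptotics (fun n => jacobiCoeff α β n m) (α + 2 * m) (besselCoeff α m) := by
  refine ((((hasPowerAsymptotics_Gamma_div_factorial α).mul
    ((hasPowerAsymptotics_descFactorial m).mul
      (hasPowerAsymptotics_ascPochhammer m (α + β + 1)))).mul
    (.const (besselCoeff α m))).congr' (.of_forall fun n => ?_)).of_eq (by ring) (by ring)
  dsimp only
  rw [jacobiCoeff, show (n : ℝ) + (α + β + 1) = n + α + β + 1 by ring]

theorem jacobiNormSq_eq_of_pos (hα : -1 < α) (hβ : -1 < β) {n : ℕ} (hn : 0 < n) :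
    jacobiNormSq α β n = 2 ^ (α + β + 1) *
      ((Real.Gamma (n + α + 1) / n.factorial * (Real.Gamma (n + β + 1) / n.factorial)) /
        (Real.Gamma (n + (α + β) + 1) / n.factorial) / (n + (n + (α + β + 1)))) := by
  have hn' : (1 : ℝ) ≤ n := by exact_mod_cast hn
  have sum_pos : 0 < n + (α + β) + 1 := by linarith
  have double_pos : 0 < n + (n + (α + β + 1)) := by linarith
  have asc_pos := ascPochhammer_pos n _ sum_pos
  have := Real.Gamma_pos_of_pos sum_pos
  have Gamma_pos : 0 < Real.Gamma (n + α + 1) := Real.Gamma_pos_of_pos (by linarith)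
  have Gamma_double : Real.Gamma (α + β + 2 * n + 2) = (n + (n + (α + β + 1))) *
      ((ascPochhammer ℝ n).eval (n + (α + β) + 1) * Real.Gamma (n + (α + β) + 1)) := by
    rw [← Gamma_add_natCast sum_pos, show n + (α + β) + 1 + n = n + (n + (α + β + 1)) by ring,
      ← Real.Gamma_add_one double_pos.ne']
    congr 1
    ring
  rw [jacobiNormSq_eq hα hβ, Gamma_double, jacobiCoeff, besselCoeff, Nat.descFactorial_self,
    add_comm α (n : ℝ), show (n : ℝ) + α + β + 1 = n + (α + β) + 1 by ring]
  field_simp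

theorem hasPowerAsymptotics_jacobiNormSq (hα : -1 < α) (hβ : -1 < β) :
    HasPowerAsymptotics (jacobiNormSq α β) (-1) (2 ^ (α + β)) := by
  have double : HasPowerAsymptotics (fun n => n + (n + (α + β + 1))) 1 (1 + 1) :=
    HasPowerAsymptotics.add (by simpa using hasPowerAsymptotics_natCast_add 0)
      (hasPowerAsymptotics_natCast_add _)
  have quotient := (HasPowerAsymptotics.const (2 ^ (α + β + 1))).mul
    ((((hasPowerAsymptotics_Gamma_div_factorial α).mul
      (hasPowerAsymptotics_Gamma_div_factorial β)).div
        (hasPowerAsymptotics_Gamma_div_factorial (α + β)) one_ne_zero).div double (by norm_num))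
  refine (quotient.congr' ?_).of_eq (by ring) (by rw [Real.rpow_add_one two_ne_zero]; ring)
  filter_upwards [eventually_gt_atTop 0] with n hn
  exact (jacobiNormSq_eq_of_pos hα hβ hn).symm

theorem abs_eval_ascPochhammer_le {x B : ℝ} {m : ℕ} (h : ∀ l < m, |x + l| ≤ B) :
    |(ascPochhammer ℝ m).eval x| ≤ B ^ m := by
  induction m with
  | zero => simp
  | succ m ih =>
    rw [ascPochhammer_succ_eval, abs_mul, pow_succ]
    exact mul_le_mul (ih fun l hl => h l (hl.trans m.lt_succ_self)) (h m m.lt_succ_self)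
      (abs_nonneg _) (pow_nonneg ((abs_nonneg _).trans (h m m.lt_succ_self)) m)

theorem abs_jacobiCoeff_le (hα : -1 < α) (β : ℝ) (n m : ℕ) :
    |jacobiCoeff α β n m| ≤ Real.Gamma (n + α + 1) / n.factorial *
      ((n : ℝ) ^ (2 * m) * ((2 + |α| + |β|) ^ m * besselCoeff α m)) := by
  have Gamma_pos : 0 < Real.Gamma (n + α + 1) :=
    Real.Gamma_pos_of_pos (by linarith [Nat.cast_nonneg (α := ℝ) n])
  have bessel_pos := besselCoeff_pos hα m
  rcases lt_or_ge n m with hnm | hmn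
  · rw [jacobiCoeff_eq_zero_of_lt hnm, abs_zero]
    positivity
  have factor_le (l : ℕ) (hl : l < m) : |n + α + β + 1 + (l : ℝ)| ≤ n * (2 + |α| + |β|) := by
    have hl' : (l : ℝ) + 1 ≤ n := by exact_mod_cast hl.trans_le hmn
    have one_le : (1 : ℝ) ≤ n := by linarith [Nat.cast_nonneg (α := ℝ) l]
    calc |n + α + β + 1 + (l : ℝ)| = |(n + (l + 1) : ℝ) + α + β| := by congr 1; ring
      _ ≤ |(n + (l + 1) : ℝ)| + |α| + |β| := abs_add_three _ _ _
      _ ≤ (n + n) + n * |α| + n * |β| := by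
        rw [abs_of_nonneg (by positivity)]
        gcongr <;> exact le_mul_of_one_le_left (abs_nonneg _) one_le
      _ = n * (2 + |α| + |β|) := by ring
  calc |jacobiCoeff α β n m|
    _ = Real.Gamma (n + α + 1) / n.factorial * (n.descFactorial m *
          |(ascPochhammer ℝ m).eval (n + α + β + 1)|) * besselCoeff α m := by
        rw [jacobiCoeff, abs_mul, abs_mul, abs_mul, abs_of_pos bessel_pos, Nat.abs_cast,
          abs_of_pos (by positivity : 0 < Real.Gamma (n + α + 1) / n.factorial)]
    _ ≤ Real.Gamma (n + α + 1) / n.factorial * ((n : ℝ) ^ m * (n * (2 + |α| + |β|)) ^ m) *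
          besselCoeff α m := by
        gcongr
        · exact_mod_cast Nat.descFactorial_le_pow n m
        · exact abs_eval_ascPochhammer_le factor_le
    _ = _ := by rw [mul_pow]; ring

end JacobiAsymptotics

/-! ### Power series with convergent, dominated coefficients -/

theorem tendstoUniformlyOn_tsum_mul_pow_of_dominated {ι R : Type*} [NormedRing R] [NormOneClass R]
    [CompleteSpace R] {p : Filter ι} [p.NeBot] {c : ι → ℕ → R} {c' : ℕ → R} {bound : ℕ → ℝ}
    {r : ℝ} (hr : 0 ≤ r) (h_sum : Summable fun m => bound m * r ^ m)
    (h_lim : ∀ m, Tendsto (fun n => c n m) p (𝓝 (c' m)))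
    (h_bound : ∀ᶠ n in p, ∀ m, ‖c n m‖ ≤ bound m) :
    TendstoUniformlyOn (fun n w => ∑' m, c n m * w ^ m) (fun w => ∑' m, c' m * w ^ m) p
      (Metric.closedBall 0 r) := by
  have h_bound' (m : ℕ) : ‖c' m‖ ≤ bound m :=
    le_of_tendsto (h_lim m).norm (h_bound.mono fun n hn => hn m)
  have norm_term_le {a w : R} {m : ℕ} {u : ℝ} (ha : ‖a‖ ≤ u) (hw : w ∈ Metric.closedBall 0 r) :
      ‖a * w ^ m‖ ≤ u * r ^ m :=
    (norm_mul_le _ _).trans <| mul_le_mul ha ((norm_pow_le w m).trans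
      (pow_le_pow_left₀ (norm_nonneg w) (mem_closedBall_zero_iff.1 hw) m)) (norm_nonneg _)
      ((norm_nonneg a).trans ha)
  have summable_diff {n : ι} (hn : ∀ m, ‖c n m‖ ≤ bound m) :
      Summable fun m => ‖c n m - c' m‖ * r ^ m := by
    refine (h_sum.mul_left 2).of_nonneg_of_le (fun m => by positivity) fun m => ?_
    rw [← mul_assoc, two_mul]
    gcongr
    exact (norm_sub_le _ _).trans (add_le_add (hn m) (h_bound' m))
  have majorant_tendsto : Tendsto (fun n => ∑' m, ‖c n m - c' m‖ * r ^ m) p (𝓝 0) := by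
    rw [← tsum_zero (β := ℕ)]
    refine tendsto_tsum_of_dominated_convergence (h_sum.mul_left 2) (fun m => ?_)
      (h_bound.mono fun n hn m => ?_)
    · simpa using (((h_lim m).sub_const (c' m)).norm.mul_const (r ^ m))
    · rw [Real.norm_of_nonneg (by positivity), ← mul_assoc, two_mul]
      gcongr
      exact (norm_sub_le _ _).trans (add_le_add (hn m) (h_bound' m))
  rw [Metric.tendstoUniformlyOn_iff]
  intro ε hε
  filter_upwards [h_bound, majorant_tendsto.eventually_lt_const hε] with n hn hlt w hw
  have summable_limit := h_sum.of_norm_bounded fun m => norm_term_le (h_bound' m) hw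
  have summable_n := h_sum.of_norm_bounded fun m => norm_term_le (hn m) hw
  rw [dist_comm, dist_eq_norm, ← summable_n.tsum_sub summable_limit]
  simp only [← sub_mul]
  exact (tsum_of_norm_bounded (summable_diff hn).hasSum fun m => norm_term_le le_rfl hw).trans_lt
    hlt

/-! ### Bessel series -/

theorem summable_besselCoeff_mul_pow {𝕜 : Type*} [RCLike 𝕜] (ν : ℝ) (w : 𝕜) :
    Summable fun k => (besselCoeff ν k : 𝕜) * w ^ k := by
  refine (Real.summable_pow_div_factorial ‖w‖).of_norm_bounded_eventually_nat ?_
  obtain ⟨N, hN⟩ := exists_nat_gt (1 - ν)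
  filter_upwards [eventually_ge_atTop N] with k hk
  have hkN : (N : ℝ) ≤ k := by exact_mod_cast hk
  have one_le_Gamma : 1 ≤ Real.Gamma (ν + k + 1) :=
    Real.Gamma_two.ge.trans <| Real.Gamma_strictMonoOn_Ici.monotoneOn Set.self_mem_Ici
      (Set.mem_Ici.2 (by linarith)) (by linarith)
  have := one_pos.trans_le one_le_Gamma
  rw [norm_mul, norm_pow, RCLike.norm_ofReal, besselCoeff, abs_of_pos (by positivity),
    one_div_mul_eq_div]
  gcongr
  exact le_mul_of_one_le_right (by positivity) one_le_Gamma

theorem hasSum_besselG (ν : ℝ) (z : ℂ) :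
    HasSum (fun k => (besselCoeff ν k : ℂ) * (-(z / 2) ^ 2) ^ k) (besselG ν z) := by
  have summable : Summable fun k => (besselCoeff ν k : ℂ) * (-(z / 2) ^ 2) ^ k :=
    summable_besselCoeff_mul_pow ν _
  refine summable.hasSum_iff.2 (tsum_congr fun k => ?_)
  have Gamma_eq : Complex.Gamma (k + ν + 1) = (Real.Gamma (ν + k + 1) : ℂ) := by
    rw [← Complex.Gamma_ofReal, add_comm ν]
    push_cast
    rfl
  rw [Gamma_eq, besselCoeff, neg_pow ((z / 2) ^ 2), ← pow_mul]
  push_cast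
  ring

theorem besselCoeff_add_two_mul {α : ℝ} (hα : -1 < α) (i k : ℕ) :
    besselCoeff (α + 2 * i) k = besselCoeff α (k + i) * ((k + i).descFactorial i *
      (Real.Gamma (α + (k + i : ℕ) + 1) / Real.Gamma (α + (k + i : ℕ) + i + 1))) := by
  have Gamma_ne : Real.Gamma (α + (k + i : ℕ) + 1) ≠ 0 :=
    (Real.Gamma_pos_of_pos (by linarith [Nat.cast_nonneg (α := ℝ) (k + i)])).ne'
  have factorial_eq : ((k + i).factorial : ℝ) = k.factorial * (k + i).descFactorial i := by
    rw [← Nat.factorial_mul_descFactorial (Nat.le_add_left i k), Nat.add_sub_cancel, Nat.cast_mul]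
  have descFactorial_ne : ((k + i).descFactorial i : ℝ) ≠ 0 :=
    right_ne_zero_of_mul (factorial_eq ▸ Nat.cast_ne_zero.2 (Nat.factorial_ne_zero _))
  rw [besselCoeff, besselCoeff, factorial_eq,
    show α + 2 * i + k + 1 = α + (k + i : ℕ) + i + 1 by push_cast; ring]
  field_simp

theorem hasSum_pow_mul_besselG {α : ℝ} (hα : -1 < α) (i : ℕ) (z : ℂ) :
    HasSum (fun m : ℕ => ((besselCoeff α m * (m.descFactorial i *
      (Real.Gamma (α + m + 1) / Real.Gamma (α + m + i + 1))) : ℝ) : ℂ) * (-(z / 2) ^ 2) ^ m)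
      ((-(z / 2) ^ 2) ^ i * besselG (α + 2 * i) z) := by
  rw [← (add_left_injective i).hasSum_iff fun m hm => ?_]
  · refine ((hasSum_besselG (α + 2 * i) z).mul_left ((-(z / 2) ^ 2) ^ i)).congr_fun fun k => ?_
    rw [Function.comp_apply, ← besselCoeff_add_two_mul hα, pow_add]
    ring
  · have hmi : m < i := not_le.1 fun h => hm ⟨m - i, Nat.sub_add_cancel h⟩
    simp [Nat.descFactorial_of_lt hmi]

/-! ### The triangular system -/

theorem descFactorial_mul_Gamma_div_Gamma {α : ℝ} (hα : -1 < α) {k N : ℕ} (hk : k ≤ N) (i : ℕ) :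
    i.descFactorial k * (Real.Gamma (α + i + 1) / Real.Gamma (α + i + k + 1)) =
      (descPochhammer ℝ k * (ascPochhammer ℝ (N - k)).comp (X + C (α + k + 1))).eval (i : ℝ) /
        (ascPochhammer ℝ N).eval (α + i + 1) := by
  have arg_pos : 0 < α + i + 1 := by linarith [Nat.cast_nonneg (α := ℝ) i]
  have := Real.Gamma_pos_of_pos arg_pos
  have := ascPochhammer_pos k _ arg_pos
  have asc_shift_pos := ascPochhammer_pos (N - k) (α + i + 1 + k) (by positivity)
  obtain ⟨d, rfl⟩ := Nat.exists_eq_add_of_le hk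
  rw [Nat.add_sub_cancel_left] at asc_shift_pos ⊢
  rw [show α + i + k + 1 = α + i + 1 + k by ring, Gamma_add_natCast arg_pos, ← ascPochhammer_mul,
    eval_mul, eval_mul, descPochhammer_eval_eq_descFactorial, eval_comp, eval_comp, eval_add,
    eval_add, eval_X, eval_X, eval_C, eval_natCast, show i + (α + k + 1) = α + i + 1 + k by ring]
  field_simp

theorem sum_descFactorial_mul_Gamma_div_Gamma_eq {α : ℝ} (hα : -1 < α) {N : ℕ} {p : ℝ[X]}
    (hp : p.natDegree ≤ N) {c : ℕ → ℝ}
    (h : ∀ i ≤ N, ∑ k ∈ Finset.range (N + 1), c k * (i.descFactorial k *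
      (Real.Gamma (α + i + 1) / Real.Gamma (α + i + k + 1))) =
        p.eval (i : ℝ) / (ascPochhammer ℝ N).eval (α + i + 1)) (i : ℕ) :
    ∑ k ∈ Finset.range (N + 1), c k * (i.descFactorial k *
      (Real.Gamma (α + i + 1) / Real.Gamma (α + i + k + 1))) =
        p.eval (i : ℝ) / (ascPochhammer ℝ N).eval (α + i + 1) := by
  set q : ℝ[X] := ∑ k ∈ Finset.range (N + 1), C (c k) *
    (descPochhammer ℝ k * (ascPochhammer ℝ (N - k)).comp (X + C (α + k + 1))) with hq
  have asc_ne (i : ℕ) : (ascPochhammer ℝ N).eval (α + i + 1) ≠ 0 :=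
    (ascPochhammer_pos N _ (by linarith [Nat.cast_nonneg (α := ℝ) i])).ne'
  have sum_eq (i : ℕ) : ∑ k ∈ Finset.range (N + 1), c k * (i.descFactorial k *
      (Real.Gamma (α + i + 1) / Real.Gamma (α + i + k + 1))) =
        q.eval (i : ℝ) / (ascPochhammer ℝ N).eval (α + i + 1) := by
    rw [hq, eval_finsetSum, Finset.sum_div]
    refine Finset.sum_congr rfl fun k hk => ?_
    rw [descFactorial_mul_Gamma_div_Gamma hα (Finset.mem_range_succ_iff.1 hk), eval_C_mul,
      mul_div_assoc]
  have natDegree_q_le : q.natDegree ≤ N := by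
    refine natDegree_sum_le_of_forall_le _ _ fun k hk => ?_
    refine (natDegree_C_mul_le _ _).trans (natDegree_mul_le.trans ?_)
    rw [natDegree_ascPochhammer_comp_X_add_C, descPochhammer_natDegree]
    exact (Nat.add_sub_of_le (Finset.mem_range_succ_iff.1 hk)).le
  have q_eq_p : q = p := by
    refine eq_of_degrees_lt_of_eval_index_eq (Finset.range (N + 1)) (v := fun i : ℕ => (i : ℝ))
      Nat.cast_injective.injOn ?_ ?_ fun i hi => ?_
    · rw [Finset.card_range]
      exact degree_le_natDegree.trans_lt (by exact_mod_cast Nat.lt_succ_of_le natDegree_q_le)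
    · rw [Finset.card_range]
      exact degree_le_natDegree.trans_lt (by exact_mod_cast Nat.lt_succ_of_le hp)
    · have agree := h i (Finset.mem_range_succ_iff.1 hi)
      rwa [sum_eq, div_left_inj' (asc_ne i)] at agree
  rw [sum_eq, q_eq_p]

/-! ### Asymptotics of the Jacobi–Sobolev coefficients -/

/-- The coefficient of `P_i^{(α,β)}` in the kernel `K_n^{(j,0)}(1,·)`. -/
noncomputable def kernelWeight (α β : ℝ) (j i : ℕ) : ℝ :=
  (derivative^[j] (jacobiP α β i)).eval 1 / jacobiNormSq α β i

/-- The coefficient of `((x-1)/2)^m` in `K_{n-1}^{(j,0)}(1,x)`. Summing over `i < n` absorbs the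
shift of index, and makes the coefficient vanish for `n = 0`. -/
noncomputable def kernelCoeff (α β : ℝ) (j n m : ℕ) : ℝ :=
  ∑ i ∈ Finset.range n, kernelWeight α β j i * jacobiCoeff α β i m

/-- The constant `Γ(α+j+1)² 2^(α+β+2j+1) (α+2j+1)` against which the limiting mass `M` is weighed
when `γ = 2(α+2j+1)`; it is the limit of `n^γ / K_{n-1}^{(j,j)}(1,1)`. -/
noncomputable def criticalMass (α β : ℝ) (j : ℕ) : ℝ :=
  Real.Gamma (α + j + 1) ^ 2 * (2 : ℝ) ^ (α + β + 2 * (j : ℝ) + 1) * (α + 2 * j + 1)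

/-- The right-hand side `θ_{α,β,j,i}` of the triangular system, for limiting mass `M`. -/
noncomputable def criticalTheta (α β : ℝ) (j : ℕ) (M : ℝ) (i : ℕ) : ℝ :=
  (M * ((i : ℝ) - j) + criticalMass α β j * (α + j + i + 1)) /
    ((α + j + i + 1) * (M + criticalMass α β j))

/-- The factor of `K_{n-1}^{(j,0)}(1,x)` in the definition of the Jacobi–Sobolev polynomial. -/
noncomputable def sobQCorrection (α β : ℝ) (j : ℕ) (Ms : ℕ → ℝ) (n : ℕ) : ℝ :=
  Ms n * (derivative^[j] (jacobiP α β n)).eval 1 / (1 + Ms n * kernK α β j j (n - 1) 1 1)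

/-- The coefficient of `((x-1)/2)^m` in the Jacobi–Sobolev polynomial of degree `n`. -/
noncomputable def sobQCoeff (α β : ℝ) (j : ℕ) (Ms : ℕ → ℝ) (n m : ℕ) : ℝ :=
  jacobiCoeff α β n m - sobQCorrection α β j Ms n * kernelCoeff α β j n m

section JacobiSobolev

variable {α β : ℝ}

theorem criticalMass_pos (hα : -1 < α) (β : ℝ) (j : ℕ) : 0 < criticalMass α β j := by
  have := Nat.cast_nonneg (α := ℝ) j
  have Gamma_pos := Real.Gamma_pos_of_pos (show 0 < α + j + 1 by linarith)
  have : 0 < α + 2 * j + 1 := by linarith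
  rw [criticalMass]
  positivity

theorem criticalMass_eq (α β : ℝ) (j : ℕ) : criticalMass α β j =
    2 * 2 ^ (α + β) * (2 ^ j * Real.Gamma (α + j + 1)) ^ 2 * (α + 2 * j + 1) := by
  have : (2 : ℝ) ^ (α + β + 2 * (j : ℝ) + 1) = 2 ^ (α + β) * (2 ^ j) ^ 2 * 2 := by
    rw [Real.rpow_add_one two_ne_zero, rpow_add_two_mul_natCast two_ne_zero, ← pow_mul, mul_comm j]
  rw [criticalMass, this]
  ring

theorem hasPowerAsymptotics_eval_one_iterate_derivative_jacobiP (hα : -1 < α) (hβ : -1 < β)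
    (j : ℕ) : HasPowerAsymptotics (fun n => (derivative^[j] (jacobiP α β n)).eval 1)
      (α + 2 * j) (1 / (2 ^ j * Real.Gamma (α + j + 1))) := by
  simp only [eval_one_iterate_derivative_jacobiP hα hβ]
  refine ((HasPowerAsymptotics.const (j.factorial / 2 ^ j)).mul
    (hasPowerAsymptotics_jacobiCoeff α β j)).of_eq (zero_add _) ?_
  have : (j.factorial : ℝ) ≠ 0 := Nat.cast_ne_zero.2 j.factorial_ne_zero
  rw [besselCoeff]
  field_simp

theorem hasPowerAsymptotics_kernelWeight (hα : -1 < α) (hβ : -1 < β) (j : ℕ) :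
    HasPowerAsymptotics (kernelWeight α β j) (α + 2 * j + 1)
      (1 / (2 ^ j * Real.Gamma (α + j + 1)) / 2 ^ (α + β)) :=
  ((hasPowerAsymptotics_eval_one_iterate_derivative_jacobiP hα hβ j).div
    (hasPowerAsymptotics_jacobiNormSq hα hβ) (by positivity)).of_eq (by ring) rfl

theorem hasPowerAsymptotics_kernelCoeff (hα : -1 < α) (hβ : -1 < β) (j m : ℕ) :
    HasPowerAsymptotics (fun n => kernelCoeff α β j n m) (α + 2 * m + (α + 2 * j + 2))
      (1 / (2 ^ j * Real.Gamma (α + j + 1)) / 2 ^ (α + β) * besselCoeff α m /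
        (2 * (α + j + m + 1))) := by
  have := Nat.cast_nonneg (α := ℝ) j
  have := Nat.cast_nonneg (α := ℝ) m
  exact (((hasPowerAsymptotics_kernelWeight hα hβ j).mul
    (hasPowerAsymptotics_jacobiCoeff α β m)).sum_range (by linarith)).of_eq (by ring)
      (by congr 1; ring)

theorem kernelCoeff_eq_zero_of_le {j n m : ℕ} (h : n ≤ m) : kernelCoeff α β j n m = 0 :=
  Finset.sum_eq_zero fun i hi => by
    rw [jacobiCoeff_eq_zero_of_lt ((Finset.mem_range.1 hi).trans_le h), mul_zero]

theorem exists_abs_kernelCoeff_le (hα : -1 < α) (hβ : -1 < β) (j : ℕ) :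
    ∃ C, ∀ n : ℕ, 0 < n → ∀ m : ℕ, |kernelCoeff α β j n m| ≤
      C * (n : ℝ) ^ (α + 2 * j + 2 + α) *
        ((n : ℝ) ^ (2 * m) * ((2 + |α| + |β|) ^ m * besselCoeff α m)) := by
  have := Nat.cast_nonneg (α := ℝ) j
  obtain ⟨C, -, h⟩ := (((hasPowerAsymptotics_kernelWeight hα hβ j).abs.mul
    (hasPowerAsymptotics_Gamma_div_factorial α)).sum_range (by linarith)).exists_le
  refine ⟨C, fun n hn m => ?_⟩
  have bessel_pos := besselCoeff_pos hα m
  have Gamma_div_nonneg (i : ℕ) : 0 ≤ Real.Gamma (i + α + 1) / i.factorial :=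
    div_nonneg (Real.Gamma_pos_of_pos (by linarith [Nat.cast_nonneg (α := ℝ) i])).le
      (Nat.cast_nonneg _)
  calc |kernelCoeff α β j n m|
    _ ≤ ∑ i ∈ Finset.range n, |kernelWeight α β j i * jacobiCoeff α β i m| :=
        Finset.abs_sum_le_sum_abs _ _
    _ ≤ ∑ i ∈ Finset.range n, |kernelWeight α β j i| * (Real.Gamma (i + α + 1) / i.factorial) *
          ((n : ℝ) ^ (2 * m) * ((2 + |α| + |β|) ^ m * besselCoeff α m)) := by
        refine Finset.sum_le_sum fun i hi => ?_
        rw [abs_mul, mul_assoc]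
        refine mul_le_mul_of_nonneg_left ((abs_jacobiCoeff_le hα β i m).trans ?_) (abs_nonneg _)
        have := Gamma_div_nonneg i
        gcongr
        exact (Finset.mem_range.1 hi).le
    _ ≤ _ := by
        rw [← Finset.sum_mul]
        refine mul_le_mul_of_nonneg_right ((h n hn).trans_eq ?_) (by positivity)
        ring_nf

theorem kernK_pred_one_one_eq (hα : -1 < α) (hβ : -1 < β) (j : ℕ) {n : ℕ} (hn : 0 < n) :
    kernK α β j j (n - 1) 1 1 = j.factorial / 2 ^ j * kernelCoeff α β j n j := by
  rw [kernK, kernelCoeff, Nat.sub_add_cancel hn, Finset.mul_sum]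
  refine Finset.sum_congr rfl fun i _ => ?_
  rw [kernelWeight, eval_one_iterate_derivative_jacobiP hα hβ]
  ring

theorem hasPowerAsymptotics_kernK_pred_one_one (hα : -1 < α) (hβ : -1 < β) (j : ℕ) :
    HasPowerAsymptotics (fun n => kernK α β j j (n - 1) 1 1) (2 * (α + 2 * j + 1))
      (1 / criticalMass α β j) := by
  refine (((HasPowerAsymptotics.const (j.factorial / 2 ^ j)).mul
    (hasPowerAsymptotics_kernelCoeff hα hβ j j)).congr' ?_).of_eq (by ring) ?_
  · filter_upwards [eventually_gt_atTop 0] with n hn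
    exact (kernK_pred_one_one_eq hα hβ j hn).symm
  · have : (j.factorial : ℝ) ≠ 0 := Nat.cast_ne_zero.2 j.factorial_ne_zero
    rw [criticalMass_eq, besselCoeff, show α + j + j + 1 = α + 2 * j + 1 by ring]
    field_simp

theorem hasPowerAsymptotics_sobQCorrection (hα : -1 < α) (hβ : -1 < β) (j : ℕ) {M : ℝ}
    (hM : M + criticalMass α β j ≠ 0) {Ms : ℕ → ℝ}
    (hMs : HasPowerAsymptotics Ms (-(2 * (α + 2 * j + 1))) M) :
    HasPowerAsymptotics (sobQCorrection α β j Ms) (-(α + 2 * j + 2))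
      (M * (1 / (2 ^ j * Real.Gamma (α + j + 1))) / (1 + M * (1 / criticalMass α β j))) := by
  have mass_pos := criticalMass_pos hα β j
  have denominator : HasPowerAsymptotics (fun n => 1 + Ms n * kernK α β j j (n - 1) 1 1) 0
      (1 + M * (1 / criticalMass α β j)) :=
    (HasPowerAsymptotics.const 1).add
      ((hMs.mul (hasPowerAsymptotics_kernK_pred_one_one hα hβ j)).of_eq (by ring) rfl)
  have denominator_ne : 1 + M * (1 / criticalMass α β j) ≠ 0 := by
    rw [mul_one_div, ← div_self mass_pos.ne', ← add_div, add_comm]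
    exact div_ne_zero hM mass_pos.ne'
  exact ((hMs.mul (hasPowerAsymptotics_eval_one_iterate_derivative_jacobiP hα hβ j)).div
    denominator denominator_ne).of_eq (by ring) rfl

theorem hasPowerAsymptotics_sobQCoeff (hα : -1 < α) (hβ : -1 < β) (j : ℕ) {M : ℝ}
    (hM : M + criticalMass α β j ≠ 0) {Ms : ℕ → ℝ}
    (hMs : HasPowerAsymptotics Ms (-(2 * (α + 2 * j + 1))) M) (m : ℕ) :
    HasPowerAsymptotics (fun n => sobQCoeff α β j Ms n m) (α + 2 * m)
      (criticalTheta α β j M m * besselCoeff α m) := by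
  refine ((hasPowerAsymptotics_jacobiCoeff α β m).sub
    (((hasPowerAsymptotics_sobQCorrection hα hβ j hM hMs).mul
      (hasPowerAsymptotics_kernelCoeff hα hβ j m)).of_eq (by ring) rfl)).of_eq rfl ?_
  have := Nat.cast_nonneg (α := ℝ) j
  have := Nat.cast_nonneg (α := ℝ) m
  have mass_ne := (criticalMass_pos hα β j).ne'
  have hM' : criticalMass α β j + M ≠ 0 := by rwa [add_comm]
  have index_ne : α + j + m + 1 ≠ 0 := by linarith
  have Gamma_ne := (Real.Gamma_pos_of_pos (show 0 < α + j + 1 by linarith)).ne'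
  have weights_eq : 1 / (2 ^ j * Real.Gamma (α + j + 1)) *
      (1 / (2 ^ j * Real.Gamma (α + j + 1)) / 2 ^ (α + β)) =
        2 * (α + 2 * j + 1) / criticalMass α β j := by
    rw [eq_div_iff mass_ne, criticalMass_eq]
    field_simp
  calc besselCoeff α m - M * (1 / (2 ^ j * Real.Gamma (α + j + 1))) /
        (1 + M * (1 / criticalMass α β j)) *
          (1 / (2 ^ j * Real.Gamma (α + j + 1)) / 2 ^ (α + β) * besselCoeff α m /
            (2 * (α + j + m + 1)))
    _ = besselCoeff α m - M / (1 + M * (1 / criticalMass α β j)) *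
          (2 * (α + 2 * j + 1) / criticalMass α β j) * besselCoeff α m /
            (2 * (α + j + m + 1)) := by
        rw [← weights_eq]
        ring
    _ = criticalTheta α β j M m * besselCoeff α m := by
        rw [criticalTheta]
        field_simp
        ring

theorem exists_abs_sobQCoeff_le (hα : -1 < α) (hβ : -1 < β) (j : ℕ) {M : ℝ}
    (hM : M + criticalMass α β j ≠ 0) {Ms : ℕ → ℝ}
    (hMs : HasPowerAsymptotics Ms (-(2 * (α + 2 * j + 1))) M) :
    ∃ C, ∀ n : ℕ, 0 < n → ∀ m : ℕ, |sobQCoeff α β j Ms n m| ≤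
      C * (n : ℝ) ^ α * ((n : ℝ) ^ (2 * m) * ((2 + |α| + |β|) ^ m * besselCoeff α m)) := by
  obtain ⟨A, -, hA⟩ := (hasPowerAsymptotics_Gamma_div_factorial α).exists_le
  obtain ⟨B, hB, hB'⟩ := (hasPowerAsymptotics_sobQCorrection hα hβ j hM hMs).abs.exists_le
  obtain ⟨D, hD⟩ := exists_abs_kernelCoeff_le hα hβ j
  refine ⟨A + B * D, fun n hn m => ?_⟩
  have n_pos : (0 : ℝ) < n := Nat.cast_pos.2 hn
  have bessel_pos := besselCoeff_pos hα m
  have jacobi_le : |jacobiCoeff α β n m| ≤ A * (n : ℝ) ^ α *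
      ((n : ℝ) ^ (2 * m) * ((2 + |α| + |β|) ^ m * besselCoeff α m)) :=
    (abs_jacobiCoeff_le hα β n m).trans (mul_le_mul_of_nonneg_right (hA n hn) (by positivity))
  have correction_le := mul_le_mul (hB' n hn) (hD n hn m) (abs_nonneg _) (by positivity)
  have cancel : (n : ℝ) ^ (-(α + 2 * j + 2)) * (n : ℝ) ^ (α + 2 * j + 2 + α) = (n : ℝ) ^ α := by
    rw [← Real.rpow_add n_pos, neg_add_cancel_left]
  calc |sobQCoeff α β j Ms n m|
    _ ≤ |jacobiCoeff α β n m| + |sobQCorrection α β j Ms n| * |kernelCoeff α β j n m| := by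
        rw [← abs_mul]
        exact abs_sub _ _
    _ ≤ _ := add_le_add jacobi_le correction_le
    _ = _ := by
        rw [← cancel]
        ring

theorem aeval_kernKPoly_pred {A : Type*} [CommRing A] [Algebra ℝ A] (hα : -1 < α) (hβ : -1 < β)
    (j : ℕ) {n : ℕ} (hn : 0 < n) (w : A) :
    aeval (1 + 2 * w) (kernKPoly α β j (n - 1)) =
      ∑ m ∈ Finset.range (n + 1), algebraMap ℝ A (kernelCoeff α β j n m) * w ^ m := by
  have aeval_jacobiP_extend {i : ℕ} (hi : i < n) : aeval (1 + 2 * w) (jacobiP α β i) =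
      ∑ m ∈ Finset.range (n + 1), algebraMap ℝ A (jacobiCoeff α β i m) * w ^ m := by
    rw [aeval_jacobiP hα hβ]
    refine Finset.sum_subset (Finset.range_mono (by lia)) fun m _ hm => ?_
    rw [jacobiCoeff_eq_zero_of_lt (by simpa using hm), map_zero, zero_mul]
  simp only [kernelCoeff, map_sum, map_mul, Finset.sum_mul]
  rw [kernKPoly, Nat.sub_add_cancel hn, map_sum, Finset.sum_comm]
  refine Finset.sum_congr rfl fun i hi => ?_
  rw [map_mul, aeval_C, aeval_jacobiP_extend (Finset.mem_range.1 hi), Finset.mul_sum]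
  exact Finset.sum_congr rfl fun m _ => (mul_assoc _ _ _).symm

theorem aeval_sobQ {A : Type*} [CommRing A] [Algebra ℝ A] (hα : -1 < α) (hβ : -1 < β) (j : ℕ)
    (Ms : ℕ → ℝ) {n : ℕ} (hn : 0 < n) (w : A) :
    aeval (1 + 2 * w) (sobQ α β j Ms n) =
      ∑ m ∈ Finset.range (n + 1), algebraMap ℝ A (sobQCoeff α β j Ms n m) * w ^ m := by
  simp only [sobQCoeff, map_sub, map_mul, sub_mul, Finset.sum_sub_distrib, mul_assoc,
    ← Finset.mul_sum]
  rw [sobQ, map_sub, map_mul, aeval_C, aeval_jacobiP hα hβ, aeval_kernKPoly_pred hα hβ j hn]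
  rfl

theorem sobQCoeff_eq_zero_of_lt {j n m : ℕ} (Ms : ℕ → ℝ) (h : n < m) :
    sobQCoeff α β j Ms n m = 0 := by
  rw [sobQCoeff, jacobiCoeff_eq_zero_of_lt h, kernelCoeff_eq_zero_of_le h.le, mul_zero, sub_zero]

theorem aeval_sobQ_div_rpow (hα : -1 < α) (hβ : -1 < β) (j : ℕ) (Ms : ℕ → ℝ) {n : ℕ} (hn : 0 < n)
    (z : ℂ) :
    aeval (1 - z ^ 2 / (2 * (n : ℂ) ^ 2)) (sobQ α β j Ms n) / (((n : ℝ) ^ α : ℝ) : ℂ) =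
      ∑' m : ℕ, ((sobQCoeff α β j Ms n m / (n : ℝ) ^ (α + 2 * m) : ℝ) : ℂ) *
        (-(z / 2) ^ 2) ^ m := by
  have n_pos : (0 : ℝ) < n := Nat.cast_pos.2 hn
  have point_eq : 1 - z ^ 2 / (2 * (n : ℂ) ^ 2) = 1 + 2 * (-(z / 2) ^ 2 / (n : ℂ) ^ 2) := by
    have : (n : ℂ) ≠ 0 := Nat.cast_ne_zero.2 hn.ne'
    field_simp
    ring
  have support (m : ℕ) (hm : m ∉ Finset.range (n + 1)) :
      ((sobQCoeff α β j Ms n m / (n : ℝ) ^ (α + 2 * m) : ℝ) : ℂ) * (-(z / 2) ^ 2) ^ m = 0 := by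
    rw [sobQCoeff_eq_zero_of_lt Ms (by simpa using hm)]
    simp
  rw [tsum_eq_sum support, point_eq, aeval_sobQ hα hβ j Ms hn, Finset.sum_div]
  refine Finset.sum_congr rfl fun m _ => ?_
  rw [rpow_add_two_mul_natCast n_pos.ne', Complex.coe_algebraMap, div_pow, ← pow_mul]
  push_cast
  ring

theorem tendstoUniformlyOn_aeval_sobQ_div_rpow (hα : -1 < α) (hβ : -1 < β) (j : ℕ) {M : ℝ}
    (hM : M + criticalMass α β j ≠ 0) {Ms : ℕ → ℝ}
    (hMs : HasPowerAsymptotics Ms (-(2 * (α + 2 * j + 1))) M) {K : Set ℂ}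
    (hK : Bornology.IsBounded K) :
    TendstoUniformlyOn
      (fun (n : ℕ) (z : ℂ) =>
        aeval (1 - z ^ 2 / (2 * (n : ℂ) ^ 2)) (sobQ α β j Ms n) / (((n : ℝ) ^ α : ℝ) : ℂ))
      (fun z => ∑' m : ℕ, ((criticalTheta α β j M m * besselCoeff α m : ℝ) : ℂ) *
        (-(z / 2) ^ 2) ^ m) atTop K := by
  obtain ⟨C, hC⟩ := exists_abs_sobQCoeff_le hα hβ j hM hMs
  obtain ⟨R, hR⟩ := hK.exists_norm_le
  have summable_majorant : Summable fun m : ℕ =>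
      C * ((2 + |α| + |β|) ^ m * besselCoeff α m) * ((R / 2) ^ 2) ^ m := by
    refine ((summable_besselCoeff_mul_pow α
      ((2 + |α| + |β|) * (R / 2) ^ 2)).mul_left C).congr fun m => ?_
    rw [mul_pow, RCLike.ofReal_real_eq_id, id_eq]
    ring
  have coeff_le : ∀ᶠ n : ℕ in atTop, ∀ m : ℕ,
      ‖((sobQCoeff α β j Ms n m / (n : ℝ) ^ (α + 2 * m) : ℝ) : ℂ)‖ ≤
        C * ((2 + |α| + |β|) ^ m * besselCoeff α m) := by
    filter_upwards [eventually_gt_atTop 0] with n hn m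
    have n_pos : (0 : ℝ) < n := Nat.cast_pos.2 hn
    have power_pos := Real.rpow_pos_of_pos n_pos (α + 2 * m)
    rw [Complex.norm_real, norm_div, Real.norm_of_nonneg power_pos.le, div_le_iff₀ power_pos,
      rpow_add_two_mul_natCast n_pos.ne']
    exact (hC n hn m).trans_eq (by ring)
  have uniform_in_w := tendstoUniformlyOn_tsum_mul_pow_of_dominated (by positivity)
    summable_majorant
    (fun m => (Complex.continuous_ofReal.tendsto _).comp
      (hasPowerAsymptotics_sobQCoeff hα hβ j hM hMs m)) coeff_le
  refine ((uniform_in_w.comp fun z : ℂ => -(z / 2) ^ 2).mono fun z hz => ?_).congr ?_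
  · rw [Set.mem_preimage, mem_closedBall_zero_iff, norm_neg, norm_pow, norm_div, Complex.norm_two]
    gcongr
    exact hR z hz
  · filter_upwards [eventually_gt_atTop 0] with n hn z _
    exact (aeval_sobQ_div_rpow hα hβ j Ms hn z).symm

end JacobiSobolev

/-! ### Solving the triangular system -/

theorem sum_choose_mul_Gamma_div_eq_sum_descFactorial {i N : ℕ} (hi : i ≤ N) (α : ℝ)
    (b : ℕ → ℝ) :
    ∑ k ∈ Finset.range (i + 1), b k * (i.choose k : ℝ) * (-1) ^ k * (k.factorial : ℝ) * 2 ^ k *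
        Real.Gamma (α + i + 1) / Real.Gamma (α + i + k + 1) =
      ∑ k ∈ Finset.range (N + 1), b k * (-2) ^ k * (i.descFactorial k *
        (Real.Gamma (α + i + 1) / Real.Gamma (α + i + k + 1))) := by
  rw [← Finset.sum_subset (Finset.range_mono (by lia : i + 1 ≤ N + 1)) fun k _ hk => ?_]
  · refine Finset.sum_congr rfl fun k _ => ?_
    rw [Nat.descFactorial_eq_factorial_mul_choose, neg_pow (2 : ℝ), Nat.cast_mul]
    ring
  · rw [Nat.descFactorial_of_lt (by simpa using hk), Nat.cast_zero, zero_mul, mul_zero]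

theorem exists_criticalTheta_eq_eval_div {α : ℝ} (hα : -1 < α) (β : ℝ) (j : ℕ) (M : ℝ) :
    ∃ p : ℝ[X], p.natDegree ≤ j + 1 ∧ ∀ i : ℕ,
      criticalTheta α β j M i = p.eval (i : ℝ) / (ascPochhammer ℝ (j + 1)).eval (α + i + 1) := by
  set D := criticalMass α β j with hD
  refine ⟨C (M + D)⁻¹ * ((C M * (X - C (j : ℝ)) + C D * (X + C (α + j + 1))) *
    (ascPochhammer ℝ j).comp (X + C (α + 1))), ?_, fun i => ?_⟩
  · have linear : (C M * (X - C (j : ℝ)) + C D * (X + C (α + j + 1))).natDegree ≤ 1 := by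
      compute_degree
    refine (natDegree_C_mul_le _ _).trans (natDegree_mul_le.trans ?_)
    rw [natDegree_ascPochhammer_comp_X_add_C]
    lia
  · have asc_ne : (ascPochhammer ℝ j).eval (α + i + 1) ≠ 0 :=
      (ascPochhammer_pos j _ (by linarith [Nat.cast_nonneg (α := ℝ) i])).ne'
    rw [criticalTheta, ← hD, ascPochhammer_succ_eval]
    simp only [eval_mul, eval_add, eval_sub, eval_C, eval_X, eval_comp]
    rw [show (i : ℝ) + (α + 1) = α + i + 1 by ring,
      show α + i + 1 + j = α + j + i + 1 by ring, show i + (α + j + 1) = α + j + i + 1 by ring]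
    field_simp

theorem hasSum_criticalTheta_mul_besselCoeff {α : ℝ} (hα : -1 < α) {β : ℝ} {j : ℕ} {M : ℝ}
    {b : ℕ → ℝ}
    (hb : ∀ i, i ≤ j + 1 →
      (∑ k ∈ Finset.range (i + 1), b k * (i.choose k : ℝ) * (-1) ^ k * (k.factorial : ℝ) * 2 ^ k *
        Real.Gamma (α + i + 1) / Real.Gamma (α + i + k + 1)) = criticalTheta α β j M i)
    (z : ℂ) :
    HasSum (fun m : ℕ => ((criticalTheta α β j M m * besselCoeff α m : ℝ) : ℂ) *
        (-(z / 2) ^ 2) ^ m)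
      (∑ i ∈ Finset.range (j + 2), (b i : ℂ) * 2 ^ i * (z / 2) ^ (2 * i) *
        besselG (α + 2 * i) z) := by
  obtain ⟨p, natDegree_p_le, theta_eq⟩ := exists_criticalTheta_eq_eval_div hα β j M
  have theta_eq_sum (m : ℕ) := (theta_eq m).trans
    (sum_descFactorial_mul_Gamma_div_Gamma_eq hα natDegree_p_le (c := fun k => b k * (-2) ^ k)
      (fun i hi => by
        rw [← theta_eq, ← hb i hi, sum_choose_mul_Gamma_div_eq_sum_descFactorial hi]) m).symm
  have series := hasSum_sum fun i (_ : i ∈ Finset.range (j + 2)) =>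
    (hasSum_pow_mul_besselG hα i z).mul_left ((b i * (-2) ^ i : ℝ) : ℂ)
  convert! series using 1
  · ext m
    rw [theta_eq_sum, Finset.sum_mul, Complex.ofReal_sum, Finset.sum_mul]
    refine Finset.sum_congr rfl fun i _ => ?_
    push_cast
    ring
  · refine Finset.sum_congr rfl fun i _ => ?_
    have sign_cancel : (-2 : ℂ) ^ i * (-(z / 2) ^ 2) ^ i = 2 ^ i * (z / 2) ^ (2 * i) := by
      rw [← mul_pow, neg_mul_neg, mul_pow, pow_mul]
    push_cast
    linear_combination (-(b i : ℂ) * besselG (α + 2 * i) z) * sign_cancel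

theorem sobQ_mehlerHeine_critical_gamma_general {α β : ℝ} (hα : -1 < α) (hβ : -1 < β) (j : ℕ)
    {M : ℝ} (hM : M + criticalMass α β j ≠ 0) {Ms : ℕ → ℝ}
    (hlim : Tendsto (fun n : ℕ => Ms n * (n : ℝ) ^ (2 * (α + 2 * j + 1))) atTop (𝓝 M))
    {b : ℕ → ℝ}
    (hb : ∀ i, i ≤ j + 1 →
      (∑ k ∈ Finset.range (i + 1), b k * (i.choose k : ℝ) * (-1) ^ k * (k.factorial : ℝ) * 2 ^ k *
        Real.Gamma (α + i + 1) / Real.Gamma (α + i + k + 1)) = criticalTheta α β j M i)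
    {K : Set ℂ} (hK : Bornology.IsBounded K) :
    TendstoUniformlyOn
      (fun (n : ℕ) (z : ℂ) =>
        aeval (1 - z ^ 2 / (2 * (n : ℂ) ^ 2)) (sobQ α β j Ms n) / (((n : ℝ) ^ α : ℝ) : ℂ))
      (fun z => ∑ i ∈ Finset.range (j + 2),
        (b i : ℂ) * 2 ^ i * (z / 2) ^ (2 * i) * besselG (α + 2 * i) z)
      atTop K := by
  have hMs : HasPowerAsymptotics Ms (-(2 * (α + 2 * j + 1))) M := by
    refine hlim.congr fun n => ?_
    rw [Real.rpow_neg n.cast_nonneg, div_inv_eq_mul]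
  exact (tendstoUniformlyOn_aeval_sobQ_div_rpow hα hβ j hM hMs hK).congr_right
    fun z _ => (hasSum_criticalTheta_mul_besselCoeff hα hb z).tsum_eq

/-- Mehler–Heine formula for `Q_n` when `γ = 2(α+2j+1)`. -/
theorem sobQ_mehlerHeine_critical_gamma (α β : ℝ) (hα : -1 < α) (hβ : -1 < β) (j : ℕ)
    (γ M : ℝ) (hM : 0 < M) (Ms : ℕ → ℝ) (hMs : ∀ n, 0 ≤ Ms n)
    (hlim : Filter.Tendsto (fun n : ℕ => Ms n * (n : ℝ) ^ γ) Filter.atTop (nhds M))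
    (hγ : γ = 2 * (α + 2 * j + 1)) (b : ℕ → ℝ)
    (hb : ∀ i, i ≤ j + 1 →
      (∑ k ∈ Finset.range (i + 1),
          b k * (Nat.choose i k : ℝ) * (-1) ^ k * (Nat.factorial k : ℝ) * 2 ^ k *
            Real.Gamma (α + i + 1) / Real.Gamma (α + i + k + 1)) =
        (M * ((i : ℝ) - j) +
            Real.Gamma (α + j + 1) ^ 2 * (2 : ℝ) ^ (α + β + 2 * (j : ℝ) + 1) *
              (α + 2 * j + 1) * (α + j + i + 1)) /
          ((α + j + i + 1) *
            (M + Real.Gamma (α + j + 1) ^ 2 * (2 : ℝ) ^ (α + β + 2 * (j : ℝ) + 1) *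
              (α + 2 * j + 1))))
    (K : Set ℂ) (hK : IsCompact K) :
    TendstoUniformlyOn
      (fun (n : ℕ) (z : ℂ) =>
        Polynomial.aeval (1 - z ^ 2 / (2 * (n : ℂ) ^ 2)) (sobQ α β j Ms n) /
          (((n : ℝ) ^ α : ℝ) : ℂ))
      (fun z => ∑ i ∈ Finset.range (j + 2),
        ((b i : ℝ) : ℂ) * 2 ^ i * (z / 2) ^ (2 * i) * besselG (α + 2 * i) z)
      Filter.atTop K := by
  subst hγ
  exact sobQ_mehlerHeine_critical_gamma_general hα hβ j
    (add_pos hM (criticalMass_pos hα β j)).ne' hlim hb hK.isBounded
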